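/- Let p be a prime, m ≥ 2, and suppose σ, σ' ∈ S_n have cycle types μ = (ξ, k^i, η) and ν = (ξ, k^j, τ), where ξ is common to both and has only parts of size < k, and η and τ contain only parts of size > k, with i ≢ j (mod p^m) but i ≡ j (mod p^(m−1)). Then there exists a character χ of S_n with χ(σ) ≢ χ(σ') (mod p^m); concretely, for λ = (n − pk, k^p), the permutation character M^λ = Ind_{S_λ}^{S_n} 1 satisfies M^λ(σ) ≢ M^λ(σ') (mod p^m). -/

import Mathlib

open Equiv

/-- The full cycle type of a permutation of `Fin n`: the cycle lengths including
fixed points as cycles of length 1. -/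
def fullCycleType {n : ℕ} (σ : Equiv.Perm (Fin n)) : Multiset ℕ :=
  σ.cycleType + Multiset.replicate (n - σ.cycleType.sum) 1

/-- The Young subgroup attached to a coloring `c : Fin n → ℕ`: the permutations
preserving each fiber of `c`. -/
def youngSubgroup {n : ℕ} (c : Fin n → ℕ) : Subgroup (Equiv.Perm (Fin n)) where
  carrier := {σ | ∀ i, c (σ i) = c i}
  one_mem' := fun _ => rfl
  mul_mem' := by
    intro a b ha hb i
    simpa [Equiv.Perm.mul_apply, hb i] using ha (b i)
  inv_mem' := by
    intro a ha i
    simpa using (ha (a⁻¹ i)).symm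

/-- The value at `x` of the character of `S_n` induced from the trivial character of
the Young subgroup of the coloring `c` (the division is exact). -/
noncomputable def indYoungVal {n : ℕ} (c : Fin n → ℕ) (x : Equiv.Perm (Fin n)) : ℕ :=
  Nat.card {k : Equiv.Perm (Fin n) // k * x * k⁻¹ ∈ youngSubgroup c} /
    Nat.card (youngSubgroup c)

/-!
`M^λ(σ)` counts the `σ`-invariant colorings of `{1, …, n}` with the fiber sizes of `λ`. A
`σ`-invariant coloring is a choice of a color for each cycle, so `M^λ(σ)` is the coefficient of
`∏ v, X v ^ k` in `∏ a, (1 + p_a)`, where `a` runs over the cycle lengths of `σ` and `p_a` is the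
power sum in `p` variables, the summand `1` standing for the color `0`. Factors with `a > k` do not
affect this coefficient.

For `i = j + N`, compare `Q` and `Q * (1 + p_k) ^ N`, where `Q` is the product belonging to
`(ξ, k^j)`. As `Q` is symmetric, its coefficient at a product of `r` distinct `X v ^ k` depends only
on `r`; call it `A r`. The coefficient of `Q * (1 + p_k) ^ N` is then `∑ l, C(N, l) (p)_l A(p - l)`,
with `(p)_l` the falling factorial. Its term `l = 0` is `A p`, the value at `σ'`. Since
`C(N, l) (p)_l = C(p, l) (N)_l` and `p^(m-1) ∣ N`, the terms with `0 < l < p` vanish modulo `p^m`.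
The term `l = p` is `(N)_p A(0) = (N)_p`, and this is `-N` modulo `p^m` by Wilson's theorem. Hence
`M^λ(σ) + i ≡ M^λ(σ') + j` modulo `p^m`.
-/

theorem cast_descFactorial_prime_sub_one {p n : ℕ} [Fact p.Prime] (h : (n : ZMod p) = -1) :
    (n.descFactorial (p - 1) : ZMod p) = -1 := by
  have hcast : (n : ZMod p) = (p - 1 : ℕ) := by simp [h, Nat.cast_pred (NeZero.pos p)]
  rw [← descPochhammer_eval_eq_descFactorial, hcast, descPochhammer_eval_eq_descFactorial,
    Nat.descFactorial_self, ZMod.wilsons_lemma]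

theorem dvd_descFactorial {N l : ℕ} (hl : l ≠ 0) : N ∣ N.descFactorial l := by
  obtain ⟨l, rfl⟩ := Nat.exists_eq_succ_of_ne_zero hl
  cases N with
  | zero => simp
  | succ N => exact Nat.succ_descFactorial_succ N l ▸ dvd_mul_right _ _

theorem prime_pow_succ_dvd_descFactorial_add {p m N : ℕ} (hp : p.Prime) (hm : m ≠ 0)
    (hN : p ^ m ∣ N) : p ^ (m + 1) ∣ N.descFactorial p + N := by
  have : Fact p.Prime := ⟨hp⟩
  obtain _ | N := N
  · simp [Nat.descFactorial_of_lt hp.pos]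
  have hcast : (N : ZMod p) = -1 := by
    rw [eq_neg_iff_add_eq_zero]
    exact_mod_cast (ZMod.natCast_eq_zero_iff _ _).2 ((dvd_pow_self p hm).trans hN)
  have hdvd : p ∣ N.descFactorial (p - 1) + 1 := by
    rw [← ZMod.natCast_eq_zero_iff, Nat.cast_add_one, cast_descFactorial_prime_sub_one hcast,
      neg_add_cancel]
  have hfac : (N + 1).descFactorial p + (N + 1) = (N + 1) * (N.descFactorial (p - 1) + 1) := by
    rw [mul_add_one, ← Nat.succ_descFactorial_succ, Nat.sub_add_cancel hp.one_le]
  rw [hfac, pow_succ]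
  exact mul_dvd_mul hN hdvd

theorem choose_mul_descFactorial_comm (a b l : ℕ) :
    a.choose l * b.descFactorial l = b.choose l * a.descFactorial l := by
  rw [Nat.descFactorial_eq_factorial_mul_choose, Nat.descFactorial_eq_factorial_mul_choose]
  ring

theorem prime_pow_succ_dvd_choose_mul_descFactorial {p m N l : ℕ} (hp : p.Prime)
    (hN : p ^ m ∣ N) (hl : l ≠ 0) (hlp : l < p) :
    p ^ (m + 1) ∣ N.choose l * p.descFactorial l := by
  rw [choose_mul_descFactorial_comm, pow_succ']
  exact mul_dvd_mul (hp.dvd_choose_self hl hlp) (hN.trans (dvd_descFactorial hl))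

theorem sum_choose_mul_descFactorial_modEq {p m N : ℕ} (hp : p.Prime) (hm : m ≠ 0)
    (hN : p ^ m ∣ N) (A : ℕ → ℕ) :
    ∑ l ∈ Finset.range (p + 1), N.choose l * p.descFactorial l * A (p - l) + N * A 0 ≡ A p
      [MOD p ^ (m + 1)] := by
  have hmid : p ^ (m + 1) ∣ ∑ l ∈ Finset.Ico 1 p, N.choose l * p.descFactorial l * A (p - l) :=
    Finset.dvd_sum fun l hl => by
      rw [Finset.mem_Ico] at hl
      exact (prime_pow_succ_dvd_choose_mul_descFactorial hp hN (by lia) hl.2).mul_right _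
  have hlast : p ^ (m + 1) ∣ (N.descFactorial p + N) * A 0 :=
    (prime_pow_succ_dvd_descFactorial_add hp hm hN).mul_right _
  have hsplit : ∑ l ∈ Finset.range (p + 1), N.choose l * p.descFactorial l * A (p - l) + N * A 0 =
      A p + ∑ l ∈ Finset.Ico 1 p, N.choose l * p.descFactorial l * A (p - l) +
        (N.descFactorial p + N) * A 0 := by
    rw [Finset.sum_range_succ, Finset.range_eq_Ico, Finset.sum_eq_sum_Ico_succ_bot hp.pos,
      choose_mul_descFactorial_comm N p p]
    simp only [Nat.choose_zero_right, Nat.descFactorial_zero, mul_one, tsub_zero, one_mul, zero_add,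
      Nat.choose_self, tsub_self]
    ring
  rw [hsplit, add_assoc]
  exact (Nat.modEq_iff_dvd' (by lia)).2 (by simpa using dvd_add hmid hlast) |>.symm

section SymmetricPolynomials

open MvPolynomial

variable {ι R : Type*} [CommSemiring R]

/-- The exponent of the monomial `∏ v ∈ S, X v ^ k`. -/
noncomputable def constExponent (S : Finset ι) (k : ℕ) : ι →₀ ℕ :=
  ∑ v ∈ S, Finsupp.single v k

theorem constExponent_apply [DecidableEq ι] (S : Finset ι) (k : ℕ) (v : ι) :
    constExponent S k v = if v ∈ S then k else 0 := by
  simp [constExponent, Finsupp.finsetSum_apply, Finsupp.single_apply]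

theorem constExponent_sub_single [DecidableEq ι] {S : Finset ι} {v : ι} (hv : v ∈ S) (k : ℕ) :
    constExponent S k - Finsupp.single v k = constExponent (S.erase v) k := by
  rw [constExponent, ← Finset.sum_erase_add _ _ hv, add_tsub_cancel_right, constExponent]

theorem mapDomain_constExponent (e : Perm ι) (S : Finset ι) (k : ℕ) :
    (constExponent S k).mapDomain e = constExponent (S.map e.toEmbedding) k := by
  simp [constExponent, Finsupp.mapDomain_finsetSum, Finsupp.mapDomain_single]

theorem exists_perm_map_eq_of_card_eq [Finite ι] {S T : Finset ι} (h : S.card = T.card) :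
    ∃ e : Perm ι, S.map e.toEmbedding = T := by
  classical
  refine ⟨(Finset.equivOfCardEq h).extendSubtype, Finset.eq_of_subset_of_card_le ?_ ?_⟩
  · intro v hv
    obtain ⟨w, hw, rfl⟩ := Finset.mem_map.1 hv
    exact (Finset.equivOfCardEq h).extendSubtype_mem w hw
  · rw [Finset.card_map, h]

theorem exists_coeff_constExponent_eq [Finite ι] {Q : MvPolynomial ι R} (hQ : Q.IsSymmetric)
    (k : ℕ) : ∃ A : ℕ → R, ∀ S : Finset ι, Q.coeff (constExponent S k) = A S.card := by
  have hcard : Function.FactorsThrough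
      (fun S : Finset ι => Q.coeff (constExponent S k)) Finset.card := by
    intro S T hST
    obtain ⟨e, rfl⟩ := exists_perm_map_eq_of_card_eq hST
    dsimp only
    rw [← mapDomain_constExponent, ← coeff_rename_mapDomain e e.injective Q, hQ e]
  obtain ⟨A, hA⟩ := (Function.factorsThrough_iff _).1 hcard
  exact ⟨A, congrFun hA⟩

variable [Fintype ι]

theorem coeff_mul_psum (Q : MvPolynomial ι R) (a : ℕ) (t : ι →₀ ℕ) :
    (Q * psum ι R a).coeff t =
      ∑ v, if a ≤ t v then Q.coeff (t - Finsupp.single v a) else 0 := by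
  simp only [psum, Finset.mul_sum, coeff_sum, X_pow_eq_monomial, coeff_mul_monomial', mul_one,
    Finsupp.single_le_iff]

theorem coeff_constExponent_mul_psum_of_lt {a k : ℕ} (h : k < a) (Q : MvPolynomial ι R)
    (S : Finset ι) : (Q * psum ι R a).coeff (constExponent S k) = 0 := by
  classical
  rw [coeff_mul_psum]
  refine Finset.sum_eq_zero fun v _ => if_neg ?_
  rw [constExponent_apply]
  split_ifs <;> lia

theorem coeff_constExponent_mul_psum_self [DecidableEq ι] {k : ℕ} (hk : k ≠ 0)
    (Q : MvPolynomial ι R) (S : Finset ι) :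
    (Q * psum ι R k).coeff (constExponent S k) =
      ∑ v ∈ S, Q.coeff (constExponent (S.erase v) k) := by
  rw [coeff_mul_psum, ← Finset.sum_filter]
  refine Finset.sum_congr ?_ fun v hv => by rw [constExponent_sub_single hv]
  ext v
  by_cases hv : v ∈ S <;> simp [constExponent_apply, hv, hk]

theorem coeff_constExponent_mul_psum_pow {k : ℕ} (hk : k ≠ 0) {Q : MvPolynomial ι R} {A : ℕ → R}
    (hA : ∀ S : Finset ι, Q.coeff (constExponent S k) = A S.card) (l : ℕ) (S : Finset ι) :
    (Q * psum ι R k ^ l).coeff (constExponent S k) =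
      S.card.descFactorial l * A (S.card - l) := by
  classical
  induction l generalizing S with
  | zero => simp [hA]
  | succ l ih =>
    rw [pow_succ, ← mul_assoc, coeff_constExponent_mul_psum_self hk]
    obtain rfl | hS := S.eq_empty_or_nonempty
    · simp
    obtain ⟨r, hr⟩ := Nat.exists_eq_add_one_of_ne_zero hS.card_ne_zero
    rw [Finset.sum_congr rfl fun v hv => by rw [ih, Finset.card_erase_of_mem hv],
      Finset.sum_const, hr, Nat.succ_descFactorial_succ, Nat.add_sub_cancel,
      Nat.add_sub_add_right, nsmul_eq_mul, Nat.cast_mul, mul_assoc]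

theorem coeff_constExponent_mul_one_add_psum_pow {k : ℕ} (hk : k ≠ 0) {Q : MvPolynomial ι R}
    {A : ℕ → R} (hA : ∀ S : Finset ι, Q.coeff (constExponent S k) = A S.card) (N : ℕ)
    (S : Finset ι) :
    (Q * (1 + psum ι R k) ^ N).coeff (constExponent S k) =
      ∑ l ∈ Finset.range (S.card + 1),
        (N.choose l * S.card.descFactorial l : ℕ) * A (S.card - l) := by
  have hterm (l : ℕ) : (Q * (psum ι R k ^ l * N.choose l)).coeff (constExponent S k) =
      (N.choose l * S.card.descFactorial l : ℕ) * A (S.card - l) := by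
    rw [← mul_assoc, mul_comm, ← map_natCast (C (σ := ι) (R := R)), coeff_C_mul,
      coeff_constExponent_mul_psum_pow hk hA, Nat.cast_mul, mul_assoc]
  rw [add_comm, add_pow, Finset.mul_sum, coeff_sum]
  simp only [one_pow, mul_one, hterm]
  refine Finset.sum_congr_of_eq_on_inter (fun l _ hl => ?_) (fun l _ hl => ?_) fun _ _ _ => rfl
  · rw [Nat.descFactorial_of_lt (by simpa using hl), mul_zero, Nat.cast_zero, zero_mul]
  · rw [Nat.choose_eq_zero_of_lt (by simpa using hl), zero_mul, Nat.cast_zero, zero_mul]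

variable (ι) in
/-- The power sum symmetric polynomial `p_s = ∏ a ∈ s, p_a` in the variables `X v`, `v : ι`, and one
further variable, specialised to `1`. -/
noncomputable def dehomPsum (s : Multiset ℕ) : MvPolynomial ι ℕ :=
  (s.map fun a => 1 + psum ι ℕ a).prod

theorem dehomPsum_add (s t : Multiset ℕ) :
    dehomPsum ι (s + t) = dehomPsum ι s * dehomPsum ι t := by
  simp [dehomPsum]

theorem dehomPsum_replicate (N k : ℕ) :
    dehomPsum ι (Multiset.replicate N k) = (1 + psum ι ℕ k) ^ N := by
  simp [dehomPsum]

theorem dehomPsum_isSymmetric (s : Multiset ℕ) : (dehomPsum ι s).IsSymmetric :=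
  (mem_symmetricSubalgebra _).1 <| multiset_prod_mem _ fun q hq => by
    obtain ⟨a, -, rfl⟩ := Multiset.mem_map.1 hq
    exact IsSymmetric.one.add (psum_isSymmetric ι ℕ a)

theorem coeff_zero_dehomPsum {s : Multiset ℕ} (hs : 0 ∉ s) : (dehomPsum ι s).coeff 0 = 1 := by
  rw [← constantCoeff_eq, dehomPsum, map_multiset_prod, Multiset.map_map]
  refine Multiset.prod_eq_one fun x hx => ?_
  obtain ⟨a, ha, rfl⟩ := Multiset.mem_map.1 hx
  simp [psum, ne_of_mem_of_not_mem ha hs]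

theorem coeff_constExponent_dehomPsum_add_of_lt {k : ℕ} {η : Multiset ℕ} (hη : ∀ a ∈ η, k < a)
    (s : Multiset ℕ) (S : Finset ι) :
    (dehomPsum ι (s + η)).coeff (constExponent S k) =
      (dehomPsum ι s).coeff (constExponent S k) := by
  induction η using Multiset.induction_on with
  | empty => rw [add_zero]
  | cons a η ih =>
    obtain ⟨ha, hη⟩ := Multiset.forall_mem_cons.1 hη
    have hcons : dehomPsum ι (s + a ::ₘ η) =
        dehomPsum ι (s + η) + dehomPsum ι (s + η) * psum ι ℕ a := by
      simp only [dehomPsum, Multiset.add_cons, Multiset.map_cons, Multiset.prod_cons]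
      ring
    rw [hcons, coeff_add, coeff_constExponent_mul_psum_of_lt ha, add_zero, ih hη]

theorem coeff_dehomPsum_add_replicate_modEq {m N k : ℕ} (hp : (Fintype.card ι).Prime) (hm : m ≠ 0)
    (hk : k ≠ 0) (hN : Fintype.card ι ^ m ∣ N) {s : Multiset ℕ} (hs : 0 ∉ s) :
    (dehomPsum ι (s + Multiset.replicate N k)).coeff (constExponent Finset.univ k) + N ≡
      (dehomPsum ι s).coeff (constExponent Finset.univ k) [MOD Fintype.card ι ^ (m + 1)] := by
  obtain ⟨A, hA⟩ := exists_coeff_constExponent_eq (dehomPsum_isSymmetric (ι := ι) s) k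
  have hA0 : A 0 = 1 := by
    rw [← Finset.card_empty (α := ι), ← hA]
    exact coeff_zero_dehomPsum hs
  rw [dehomPsum_add, dehomPsum_replicate, coeff_constExponent_mul_one_add_psum_pow hk hA, hA]
  simpa [hA0] using sum_choose_mul_descFactorial_modEq hp hm hN A

end SymmetricPolynomials

section Counting
open Equiv.Perm
variable {α : Type*}

theorem exists_comp_perm_eq_iff {C : Type*} [Fintype α] [DecidableEq C] {f g : α → C} :
    (∃ π : Perm α, f ∘ π = g) ↔
      ∀ v, (Finset.univ.filter fun x => g x = v).card =
        (Finset.univ.filter fun x => f x = v).card := by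
  simp only [← Fintype.card_subtype]
  constructor
  · rintro ⟨π, rfl⟩ v
    exact Fintype.card_congr (π.subtypeEquiv fun _ => Iff.rfl)
  · intro h
    exact ⟨ofFiberEquiv fun v => Fintype.equivOfCardEq (h v), funext (ofFiberEquiv_map _)⟩

theorem card_smul_eq_card_stabilizer_mul {G X : Type*} [Group G] [MulAction G X] (b : X)
    (P : X → Prop) :
    Nat.card {g : G // P (g • b)} =
      Nat.card (MulAction.stabilizer G b) * Nat.card {y : MulAction.orbit G b // P y} := by
  let e := MulAction.orbitEquivQuotientStabilizer G b
  have hcoset : Nat.card {y : MulAction.orbit G b // P y} = Nat.card {q | P (e.symm q)} :=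
    Nat.card_congr <| e.subtypeEquiv fun y => by simp
  rw [hcoset, ← QuotientGroup.card_preimage_mk]
  rfl

theorem sameCycle_setoid_le_ker_iff {C : Type*} {σ : Perm α} {f : α → C} :
    SameCycle.setoid σ ≤ Setoid.ker f ↔ f ∘ σ = f := by
  constructor
  · intro h
    exact funext fun x => h (sameCycle_apply_left.2 SameCycle.rfl)
  · rintro h x y ⟨i, rfl⟩
    have hpow (i : ℤ) : f ∘ ⇑(σ ^ i) = f := by
      induction i with
      | zero => rfl
      | succ i ih => rw [zpow_add_one, coe_mul, ← Function.comp_assoc, ih, h]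
      | pred i ih =>
        rw [zpow_sub_one, coe_mul, ← Function.comp_assoc, ih]
        exact (σ.comp_symm_eq f f).2 h.symm
    exact (congrFun (hpow i) x).symm

theorem forall_card_fiber_option_iff {ι : Type*} [Fintype α] [Finite ι] [DecidableEq ι]
    {f g : α → Option ι} :
    (∀ o, (Finset.univ.filter fun x => f x = o).card =
        (Finset.univ.filter fun x => g x = o).card) ↔
      ∀ v : ι, (Finset.univ.filter fun x => f x = some v).card =
        (Finset.univ.filter fun x => g x = some v).card := by
  have := Fintype.ofFinite ι
  refine ⟨fun h v => h (some v), fun h => Option.forall.2 ⟨?_, h⟩⟩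
  have htotal (f : α → Option ι) : (Finset.univ.filter fun x => f x = none).card +
      ∑ v, (Finset.univ.filter fun x => f x = some v).card = Fintype.card α := by
    rw [← Fintype.sum_option fun o => (Finset.univ.filter fun x => f x = o).card]
    simp [Finset.sum_card_fiberwise_eq_card_filter]
  have := (htotal f).trans (htotal g).symm
  simpa [h] using this

theorem eq_of_filter_two_le_eq {s t : Multiset ℕ} (hs : 0 ∉ s) (ht : 0 ∉ t)
    (hsum : s.sum = t.sum) (h : s.filter (2 ≤ ·) = t.filter (2 ≤ ·)) : s = t := by
  have hsplit {u : Multiset ℕ} (hu : 0 ∉ u) :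
      u = u.filter (2 ≤ ·) + Multiset.replicate (u.sum - (u.filter (2 ≤ ·)).sum) 1 := by
    have hones : u.filter (¬ 2 ≤ ·) = Multiset.replicate (u.filter (¬ 2 ≤ ·)).card 1 :=
      Multiset.eq_replicate_card.2 fun a ha => by
        obtain ⟨hau, ha⟩ := Multiset.mem_filter.1 ha
        have := ne_of_mem_of_not_mem hau hu
        lia
    have hfilter := Multiset.filter_add_not (2 ≤ ·) u
    have hcard := congrArg Multiset.sum hfilter
    rw [hones, Multiset.sum_add, Multiset.sum_replicate, smul_eq_mul, mul_one] at hcard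
    rw [← hcard, Nat.add_sub_cancel_left, ← hones, hfilter]
  rw [hsplit hs, hsplit ht, hsum, h]

section CycleOrbits
variable [Fintype α] [DecidableEq α]

/-- The set of cycles of `σ`, fixed points included: the orbits of the group generated by `σ`,
encoded as the quotient by `SameCycle`. -/
abbrev CycleOrbit (σ : Perm α) : Type _ := Quotient (SameCycle.setoid σ)

instance (σ : Perm α) : DecidableRel (SameCycle.setoid σ) :=
  inferInstanceAs (DecidableRel σ.SameCycle)

variable {σ : Perm α}

/-- The length of a cycle of `σ`, which is `1` for a fixed point. -/
def cycleOrbitCard (ω : CycleOrbit σ) : ℕ :=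
  (Finset.univ.filter fun x => Quotient.mk _ x = ω).card

theorem cycleOrbitCard_mk_of_apply_ne {x : α} (hx : σ x ≠ x) :
    cycleOrbitCard (Quotient.mk (SameCycle.setoid σ) x) = (σ.cycleOf x).support.card := by
  refine congrArg Finset.card (Finset.ext fun y => ?_)
  rw [Finset.mem_filter_univ, mem_support_cycleOf_iff' hx, Quotient.eq]
  exact sameCycle_comm

theorem cycleOrbitCard_pos (ω : CycleOrbit σ) : 0 < cycleOrbitCard ω := by
  induction ω using Quotient.ind with
  | _ x => exact Finset.card_pos.2 ⟨x, Finset.mem_filter_univ x |>.2 rfl⟩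

theorem sum_cycleOrbitCard_filter (p : CycleOrbit σ → Prop) [DecidablePred p] :
    ∑ ω with p ω, cycleOrbitCard ω = (Finset.univ.filter fun x => p (Quotient.mk _ x)).card := by
  simp only [cycleOrbitCard, Finset.sum_card_fiberwise_eq_card_filter, Finset.mem_filter_univ]

theorem two_le_cycleOrbitCard_mk_iff {x : α} :
    2 ≤ cycleOrbitCard (Quotient.mk (SameCycle.setoid σ) x) ↔ σ x ≠ x := by
  refine ⟨fun h hx => ?_, fun hx => ?_⟩
  · obtain ⟨a, ha, b, hb, hab⟩ := Finset.one_lt_card.1 h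
    rw [Finset.mem_filter_univ, Quotient.eq] at ha hb
    exact hab ((ha.eq_of_right hx).trans (hb.eq_of_right hx).symm)
  · rw [cycleOrbitCard_mk_of_apply_ne hx]
    exact two_le_card_support_cycleOf_iff.2 hx

theorem filter_map_cycleOrbitCard (σ : Perm α) :
    (Finset.univ.val.map (cycleOrbitCard (σ := σ))).filter (2 ≤ ·) = σ.cycleType := by
  rw [Multiset.filter_map, ← Finset.filter_val, cycleType_def]
  let cycleOfOrbit : CycleOrbit σ → Perm α := Quotient.lift σ.cycleOf fun _ _ h => h.cycleOf_eq
  refine Multiset.map_eq_map_of_bij_of_nodup _ _ (Finset.nodup _) (Finset.nodup _)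
    (fun ω _ => cycleOfOrbit ω) ?mem ?inj ?surj ?card
  all_goals simp only [Finset.mem_val, Finset.mem_filter_univ, Function.comp_apply, Quotient.forall,
      Quotient.exists, two_le_cycleOrbitCard_mk_iff]
  case mem =>
    exact fun x hx => cycleOf_mem_cycleFactorsFinset_iff.2 (mem_support.2 hx)
  case inj =>
    exact fun x hx y hy h => Quotient.sound <|
      (sameCycle_iff_cycleOf_eq_of_mem_support (mem_support.2 hx) (mem_support.2 hy)).2 h
  case surj =>
    intro c hc
    obtain ⟨x, hx⟩ := (mem_cycleFactorsFinset_iff.1 hc).1.nonempty_support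
    exact ⟨x, mem_support.1 (mem_cycleFactorsFinset_support_le hc hx),
      (cycle_is_cycleOf hx hc).symm⟩
  case card =>
    exact fun x hx => cycleOrbitCard_mk_of_apply_ne hx

theorem map_cycleOrbitCard_eq_parts_partition (σ : Perm α) :
    Finset.univ.val.map (cycleOrbitCard (σ := σ)) = σ.partition.parts := by
  refine eq_of_filter_two_le_eq ?_ ?_ ?_ ?_
  · intro h
    obtain ⟨ω, -, hω⟩ := Multiset.mem_map.1 h
    exact (cycleOrbitCard_pos ω).ne' hω
  · exact fun h => (σ.partition.parts_pos h).ne' rfl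
  · simpa [σ.partition.parts_sum] using sum_cycleOrbitCard_filter (σ := σ) fun _ => True
  · rw [filter_map_cycleOrbitCard, filter_parts_partition_eq_cycleType]

theorem coeff_dehomPsum_map {Ω ι : Type*} [Fintype Ω] [Fintype ι] [DecidableEq ι]
    (w : Ω → ℕ) (t : ι →₀ ℕ) :
    (dehomPsum ι (Finset.univ.val.map w)).coeff t =
      Nat.card {g : Ω → Option ι // ∀ v, ∑ ω with g ω = some v, w ω = t v} := by
  classical
  let exponent (ω : Ω) (o : Option ι) : ι →₀ ℕ := o.elim 0 fun v => Finsupp.single v (w ω)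
  have hexpand : dehomPsum ι (Finset.univ.val.map w) =
      ∑ g : Ω → Option ι, MvPolynomial.monomial (∑ ω, exponent ω (g ω)) 1 := by
    have hfactor (ω : Ω) : 1 + MvPolynomial.psum ι ℕ (w ω) =
        ∑ o, MvPolynomial.monomial (exponent ω o) 1 := by
      simp [exponent, MvPolynomial.psum, MvPolynomial.X_pow_eq_monomial, Fintype.sum_option]
    rw [dehomPsum, Multiset.map_map, Finset.prod_map_val]
    simp only [Function.comp_apply, hfactor, Finset.prod_univ_sum, Fintype.piFinset_univ,
      MvPolynomial.monomial_sum_one]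
  have hexponent (g : Ω → Option ι) :
      ∑ ω, exponent ω (g ω) = t ↔ ∀ v, ∑ ω with g ω = some v, w ω = t v := by
    have happly (ω : Ω) (v : ι) : exponent ω (g ω) v = if g ω = some v then w ω else 0 := by
      cases h : g ω <;> simp [exponent, Finsupp.single_apply]
    simp only [Finsupp.ext_iff, Finsupp.finsetSum_apply, happly, Finset.sum_filter]
  simp only [hexpand, MvPolynomial.coeff_sum, MvPolynomial.coeff_monomial, hexponent]
  rw [Nat.card_eq_fintype_card, Fintype.card_subtype, Finset.card_filter]

theorem card_invariant_coloring_eq_coeff {ι : Type*} [Fintype ι] [DecidableEq ι] (σ : Perm α)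
    (t : ι →₀ ℕ) :
    Nat.card {f : α → Option ι // f ∘ σ = f ∧
        ∀ v, (Finset.univ.filter fun x => f x = some v).card = t v} =
      (dehomPsum ι σ.partition.parts).coeff t := by
  rw [← map_cycleOrbitCard_eq_parts_partition, coeff_dehomPsum_map]
  simp only [sum_cycleOrbitCard_filter, ← sameCycle_setoid_le_ker_iff]
  exact Nat.card_congr <| (subtypeSubtypeEquivSubtypeInter _ _).symm.trans <|
    (Setoid.liftEquiv (SameCycle.setoid σ)).subtypeEquiv fun f => Iff.rfl

end CycleOrbits

theorem fullCycleType_eq_parts_partition {n : ℕ} (σ : Perm (Fin n)) :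
    fullCycleType σ = σ.partition.parts := by
  rw [fullCycleType, parts_partition, sum_cycleType, Fintype.card_fin]

theorem zero_notMem_fullCycleType {n : ℕ} (σ : Perm (Fin n)) : 0 ∉ fullCycleType σ := by
  rw [fullCycleType_eq_parts_partition]
  exact fun h => (σ.partition.parts_pos h).ne' rfl

theorem mem_youngSubgroup_iff {n : ℕ} {c : Fin n → ℕ} {σ : Perm (Fin n)} :
    σ ∈ youngSubgroup c ↔ c ∘ σ = c :=
  funext_iff.symm

theorem indYoungVal_comp_eq_card {n : ℕ} {C : Type*} (c : Fin n → C) {e : C → ℕ}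
    (he : Function.Injective e) (σ : Perm (Fin n)) :
    indYoungVal (e ∘ c) σ =
      Nat.card {f : Fin n → C // f ∘ σ = f ∧ ∃ π : Perm (Fin n), c ∘ π = f} := by
  let := arrowAction (G := Perm (Fin n)) (A := Fin n) (B := C)
  have hsmul (g : Perm (Fin n)) (f : Fin n → C) : g • f = f ∘ ⇑g⁻¹ := rfl
  have hstab : youngSubgroup (e ∘ c) = MulAction.stabilizer (Perm (Fin n)) c := by
    ext g
    rw [mem_youngSubgroup_iff, Function.comp_assoc, he.comp_left.eq_iff, ← inv_mem_iff,
      MulAction.mem_stabilizer_iff, hsmul, inv_inv]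
  have hconj : Nat.card {k : Perm (Fin n) // k * σ * k⁻¹ ∈ youngSubgroup (e ∘ c)} =
      Nat.card {g : Perm (Fin n) // (g • c) ∘ σ = g • c} := by
    refine Nat.card_congr <| (Equiv.inv _).subtypeEquiv fun k => ?_
    rw [mem_youngSubgroup_iff, Function.comp_assoc, he.comp_left.eq_iff, Equiv.inv_apply, hsmul,
      inv_inv, coe_mul, coe_mul, ← Function.comp_assoc, ← Function.comp_assoc]
    exact k.comp_symm_eq c _
  rw [indYoungVal, hconj, card_smul_eq_card_stabilizer_mul c fun f => f ∘ σ = f, hstab,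
    Nat.mul_div_cancel_left _ Nat.card_pos]
  refine Nat.card_congr <| (subtypeSubtypeEquivSubtypeInter
    (· ∈ MulAction.orbit (Perm (Fin n)) c) fun f => f ∘ σ = f).trans <|
      subtypeEquivRight fun f => ?_
  rw [and_comm, MulAction.mem_orbit_iff]
  exact and_congr_right' (Equiv.inv _).exists_congr_left

theorem indYoungVal_comp_eq_coeff {n : ℕ} {ι : Type*} [Fintype ι] [DecidableEq ι]
    {c : Fin n → Option ι} {e : Option ι → ℕ} (he : Function.Injective e) {t : ι →₀ ℕ}
    (ht : ∀ v, (Finset.univ.filter fun x => c x = some v).card = t v) (σ : Perm (Fin n)) :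
    indYoungVal (e ∘ c) σ = (dehomPsum ι (fullCycleType σ)).coeff t := by
  rw [indYoungVal_comp_eq_card c he, fullCycleType_eq_parts_partition,
    ← card_invariant_coloring_eq_coeff]
  simp only [exists_comp_perm_eq_iff, forall_card_fiber_option_iff, ht]

theorem indYoungVal_eq_coeff {p n k : ℕ} {c : Fin n → ℕ} (hcle : ∀ x, c x ≤ p)
    (hcv : ∀ v : ℕ, 1 ≤ v → v ≤ p → (Finset.univ.filter fun x => c x = v).card = k)
    (σ : Perm (Fin n)) :
    indYoungVal c σ =
      (dehomPsum (Fin p) (fullCycleType σ)).coeff (constExponent Finset.univ k) := by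
  let c' (x : Fin n) : Option (Fin p) := finSuccEquiv p ⟨c x, Nat.lt_succ_of_le (hcle x)⟩
  let e (o : Option (Fin p)) : ℕ := (finSuccEquiv p).symm o
  have he : Function.Injective e := Fin.val_injective.comp (finSuccEquiv p).symm.injective
  have hc : e ∘ c' = c := funext fun x => by simp [e, c']
  rw [← indYoungVal_comp_eq_coeff (c := c') he ?_, hc]
  intro v
  have hfiber (x : Fin n) : c' x = some v ↔ c x = v + 1 := by
    rw [← he.eq_iff, ← Function.comp_apply (f := e), hc]
    simp [e]
  simp [hfiber, hcv, constExponent_apply]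

end Counting

theorem stmt_19_general {p n k m i j : ℕ} (hp : p.Prime) (hm : 2 ≤ m) (hk : 1 ≤ k)
    {σ σ' : Equiv.Perm (Fin n)} {ξ η τ : Multiset ℕ}
    (hη : ∀ a ∈ η, k < a) (hτ : ∀ a ∈ τ, k < a)
    (hσ : fullCycleType σ = ξ + Multiset.replicate i k + η)
    (hσ' : fullCycleType σ' = ξ + Multiset.replicate j k + τ)
    (hij : (i : ℤ) ≡ j [ZMOD (p : ℤ) ^ (m - 1)])
    {c : Fin n → ℕ} (hcle : ∀ x, c x ≤ p)
    (hcv : ∀ v : ℕ, 1 ≤ v → v ≤ p → (Finset.univ.filter fun x => c x = v).card = k) :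
    (indYoungVal c σ : ℤ) + i ≡ indYoungVal c σ' + j [ZMOD (p : ℤ) ^ m] := by
  norm_cast at hij ⊢
  wlog hji : j ≤ i generalizing i j σ σ' η τ
  · exact (this hτ hη hσ' hσ hij.symm (le_of_not_ge hji)).symm
  obtain ⟨m, rfl⟩ := Nat.exists_eq_add_one_of_ne_zero (by lia : m ≠ 0)
  obtain ⟨N, rfl⟩ := Nat.exists_eq_add_of_le' hji
  have hN : Fintype.card (Fin p) ^ m ∣ N := by
    rw [Fintype.card_fin]
    simpa using (Nat.modEq_iff_dvd' hji).1 hij.symm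
  have hpos : 0 ∉ ξ + Multiset.replicate j k := fun h =>
    zero_notMem_fullCycleType σ' <| hσ' ▸ Multiset.mem_add.2 (.inl h)
  have hmod := coeff_dehomPsum_add_replicate_modEq (m := m) (by rwa [Fintype.card_fin]) (by lia)
    (by lia : k ≠ 0) hN hpos
  rw [Fintype.card_fin] at hmod
  rw [add_comm N j, Multiset.replicate_add, ← add_assoc] at hσ
  rw [indYoungVal_eq_coeff hcle hcv, indYoungVal_eq_coeff hcle hcv, hσ, hσ',
    coeff_constExponent_dehomPsum_add_of_lt hη, coeff_constExponent_dehomPsum_add_of_lt hτ,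
    ← add_assoc]
  exact hmod.add_right j

/-- Suppose `σ, σ'` have cycle types `(ξ, k^i, η)` and `(ξ, k^j, τ)` with
`ξ` of parts `< k`, `η, τ` of parts `> k`, `i ≡ j (mod p^(m-1))` but `i ≢ j (mod p^m)`,
`m ≥ 2`.  Then for `λ = (n - pk, k^p)` (realized by a coloring `c` whose fiber over `0`
has `n - pk` elements and whose fibers over `1, …, p` have `k` elements each), the
permutation character `M^λ = Ind_{S_λ}^{S_n} 1` satisfies
`M^λ(σ) ≢ M^λ(σ') (mod p^m)`. -/
theorem stmt_19 (p n k m i j : ℕ) (hp : p.Prime) (hm : 2 ≤ m) (hk : 1 ≤ k)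
    (hpk : p * k ≤ n) (σ σ' : Equiv.Perm (Fin n)) (ξ η τ : Multiset ℕ)
    (hξ : ∀ a ∈ ξ, a < k) (hη : ∀ a ∈ η, k < a) (hτ : ∀ a ∈ τ, k < a)
    (hσ : fullCycleType σ = ξ + Multiset.replicate i k + η)
    (hσ' : fullCycleType σ' = ξ + Multiset.replicate j k + τ)
    (hij1 : (p : ℤ) ^ (m - 1) ∣ (i : ℤ) - (j : ℤ))
    (hij2 : ¬ (p : ℤ) ^ m ∣ (i : ℤ) - (j : ℤ))
    (c : Fin n → ℕ) (hcle : ∀ x, c x ≤ p)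
    (hc0 : (Finset.univ.filter (fun x => c x = 0)).card = n - p * k)
    (hcv : ∀ v : ℕ, 1 ≤ v → v ≤ p → (Finset.univ.filter (fun x => c x = v)).card = k) :
    ¬ (p : ℤ) ^ m ∣ (indYoungVal c σ : ℤ) - (indYoungVal c σ' : ℤ) := by
  intro h
  have hmod := stmt_19_general hp hm hk hτ hη hσ' hσ (Int.modEq_iff_dvd.2 hij1) hcle hcv
  exact hij2 ((Int.modEq_iff_dvd.2 h).add_left_cancel hmod).dvd
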